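/- A connected bridgeless multigraph G is 3-edge-connected (i.e., the removal of any set of at most two edges leaves G connected) if and only if every C1-set of G has cardinality 1. -/

import Mathlib

/-- A finite multigraph: finite vertex and edge types, each edge carrying a source and a
target vertex (this is an auxiliary orientation); loops and parallel edges are allowed. -/
structure Multigraph where
  V : Type
  E : Type
  [fV : Fintype V]
  [fE : Fintype E]
  [dV : DecidableEq V]
  [dE : DecidableEq E]
  s : E → V
  t : E → V

attribute [instance] Multigraph.fV Multigraph.fE Multigraph.dV Multigraph.dE

namespace Multigraph

variable (G : Multigraph)

/-- Two vertices are adjacent if some edge joins them. -/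
def Adj (a b : G.V) : Prop :=
  ∃ e : G.E, (G.s e = a ∧ G.t e = b) ∨ (G.s e = b ∧ G.t e = a)

/-- A multigraph is connected if it is nonempty and any two vertices are joined by a walk. -/
def Connected : Prop :=
  Nonempty G.V ∧ ∀ a b : G.V, Relation.ReflTransGen G.Adj a b

/-- The graph obtained by deleting the edges in `F` is connected. -/
def ConnectedAvoiding (F : Set G.E) : Prop :=
  ∀ a b : G.V, Relation.ReflTransGen
    (fun x y => ∃ e : G.E, e ∉ F ∧ ((G.s e = x ∧ G.t e = y) ∨ (G.s e = y ∧ G.t e = x))) a b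

/-- The valency of a vertex: the number of half-edges at it (a loop counts twice). -/
def val (v : G.V) : ℕ :=
  (Finset.univ.filter (fun e => G.s e = v)).card + (Finset.univ.filter (fun e => G.t e = v)).card

/-- The number of loops based at a vertex. -/
def loops (v : G.V) : ℕ :=
  (Finset.univ.filter (fun e => G.s e = v ∧ G.t e = v)).card

/-- The number of edges joining two vertices. -/
def edgesBetween (v w : G.V) : ℕ :=
  (Finset.univ.filter (fun e => (G.s e = v ∧ G.t e = w) ∨ (G.s e = w ∧ G.t e = v))).card

/-- The first Betti number `b₁(G) = |E| - |V| + 1` (of a connected graph). -/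
def b1 : ℤ := (Fintype.card G.E : ℤ) - (Fintype.card G.V : ℤ) + 1

/-- The boundary map `∂ : C₁(G,ℤ) → C₀(G,ℤ)`, sending an edge `e` to `t e - s e`. -/
def boundaryHom : (G.E → ℤ) →+ (G.V → ℤ) where
  toFun c := fun v =>
    ∑ e : G.E, c e * ((if G.t e = v then 1 else 0) - (if G.s e = v then 1 else 0))
  map_zero' := by funext v; simp
  map_add' a b := by
    funext v
    simp [Pi.add_apply, add_mul, Finset.sum_add_distrib]

/-- The coboundary map `δ : C₀(G,ℤ) → C₁(G,ℤ)`. -/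
def coboundaryHom : (G.V → ℤ) →+ (G.E → ℤ) where
  toFun f := fun e => f (G.t e) - f (G.s e)
  map_zero' := by funext e; simp
  map_add' a b := by funext e; simp only [Pi.add_apply]; ring

/-- The cycle space `H₁(G,ℤ)`, i.e. the kernel of the boundary map. -/
def cycleSpace : AddSubgroup (G.E → ℤ) := (G.boundaryHom).ker

/-- `C` is the edge set of a closed walk with no repeated vertices except the
initial/terminal one (so a loop is a cycle). -/
def IsCycle (C : Finset G.E) : Prop :=
  ∃ n : ℕ, 0 < n ∧ ∃ (e : Fin n → G.E) (v : Fin (n + 1) → G.V),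
    Function.Injective e ∧
    (∀ i : Fin n, (G.s (e i) = v i.castSucc ∧ G.t (e i) = v i.succ) ∨
        (G.s (e i) = v i.succ ∧ G.t (e i) = v i.castSucc)) ∧
    v 0 = v (Fin.last n) ∧
    (∀ i j : Fin (n + 1), v i = v j →
        i = j ∨ (i = 0 ∧ j = Fin.last n) ∨ (i = Fin.last n ∧ j = 0)) ∧
    C = Finset.image e Finset.univ

/-- A bridge (separating edge) is an edge contained in no cycle. -/
def IsBridge (e : G.E) : Prop := ∀ C : Finset G.E, G.IsCycle C → e ∉ C

def Bridgeless : Prop := ∀ e : G.E, ¬ G.IsBridge e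

/-- `e₁ ∼ e₂` iff every cycle containing `e₁` contains `e₂` and conversely. -/
def Sim (e₁ e₂ : G.E) : Prop :=
  ∀ C : Finset G.E, G.IsCycle C → (e₁ ∈ C ↔ e₂ ∈ C)

/-- The C1-sets: the equivalence classes of the relation `Sim`. -/
def IsC1Set (S : Set G.E) : Prop := ∃ e : G.E, S = {e' | G.Sim e e'}

/-- The multigraph obtained by contracting every edge in `F` (a contracted loop is
simply deleted). -/
noncomputable def contractSet (F : Set G.E) : Multigraph :=
  letI : DecidableEq (Quot (fun a b : G.V => ∃ e ∈ F, G.s e = a ∧ G.t e = b)) :=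
    Classical.decEq _
  { V := Quot (fun a b : G.V => ∃ e ∈ F, G.s e = a ∧ G.t e = b)
    E := {e : G.E // e ∉ F}
    fV := Fintype.ofSurjective (Quot.mk _) (fun q => Quot.exists_rep q)
    fE := Fintype.ofInjective (Subtype.val) Subtype.val_injective
    dV := inferInstance
    dE := inferInstance
    s := fun e => Quot.mk _ (G.s e.1)
    t := fun e => Quot.mk _ (G.t e.1) }

/-- `G^(2)`: the multigraph obtained from `G` by contracting every bridge. -/
noncomputable def contractBridges : Multigraph := G.contractSet {e | G.IsBridge e}

/-- An isomorphism of multigraphs. -/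
structure Iso (G₁ G₂ : Multigraph) where
  vEquiv : G₁.V ≃ G₂.V
  eEquiv : G₁.E ≃ G₂.E
  endpoints : ∀ e : G₁.E,
    (G₂.s (eEquiv e) = vEquiv (G₁.s e) ∧ G₂.t (eEquiv e) = vEquiv (G₁.t e)) ∨
    (G₂.s (eEquiv e) = vEquiv (G₁.t e) ∧ G₂.t (eEquiv e) = vEquiv (G₁.s e))

/-- The group of degree-zero divisors `Div⁰(G)`. -/
def Div0 : AddSubgroup (G.V → ℤ) where
  carrier := {D : G.V → ℤ | ∑ v : G.V, D v = 0}
  zero_mem' := by simp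
  add_mem' := by
    intro a b ha hb
    simp only [Set.mem_setOf_eq, Pi.add_apply] at *
    simp [Finset.sum_add_distrib, ha, hb]
  neg_mem' := by
    intro a ha
    simp only [Set.mem_setOf_eq, Pi.neg_apply] at *
    simp [ha]

/-- The principal divisor `div(f_v)` associated to a vertex `v`. -/
def prinDiv (v : G.V) : G.V → ℤ :=
  fun u => if u = v then 2 * (G.loops v : ℤ) - (G.val v : ℤ) else (G.edgesBetween v u : ℤ)

/-- The group of principal divisors `Prin(G)`. -/
def Prin : AddSubgroup (G.V → ℤ) := AddSubgroup.closure (Set.range G.prinDiv)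

end Multigraph

/-- `Jac(G₁) ≅ Jac(G₂)`: a ℤ-linear isomorphism of the cycle lattices preserving the
bilinear forms for which the edges are orthonormal. -/
def JacIsoGraph (G₁ G₂ : Multigraph) : Prop :=
  ∃ φ : G₁.cycleSpace ≃+ G₂.cycleSpace,
    ∀ x y : G₁.cycleSpace,
      (∑ e : G₂.E, ((φ x : G₂.E → ℤ) e) * ((φ y : G₂.E → ℤ) e)) =
      ∑ e : G₁.E, ((x : G₁.E → ℤ) e) * ((y : G₁.E → ℤ) e)

/-- Cyclic equivalence of two multigraphs: a bijection of the edge sets, together with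
signs, inducing an isomorphism of the cycle spaces. -/
def CyclicallyEquivalent (G₁ G₂ : Multigraph) : Prop :=
  ∃ (σ : G₁.E ≃ G₂.E) (ε : G₁.E → ℤ),
    (∀ e, ε e = 1 ∨ ε e = -1) ∧
    ((fun x : G₁.E → ℤ => fun e₂ : G₂.E => ε (σ.symm e₂) * x (σ.symm e₂)) ''
        (G₁.cycleSpace : Set (G₁.E → ℤ))) = (G₂.cycleSpace : Set (G₂.E → ℤ))

/-- Cyclic equivalence of metric graphs: as for graphs, with a length-preserving bijection
of the edge sets. -/
def MetricCycEquiv (G₁ : Multigraph) (ℓ₁ : G₁.E → ℝ) (G₂ : Multigraph) (ℓ₂ : G₂.E → ℝ) : Prop :=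
  ∃ (σ : G₁.E ≃ G₂.E) (ε : G₁.E → ℤ),
    (∀ e, ℓ₂ (σ e) = ℓ₁ e) ∧
    (∀ e, ε e = 1 ∨ ε e = -1) ∧
    ((fun x : G₁.E → ℤ => fun e₂ : G₂.E => ε (σ.symm e₂) * x (σ.symm e₂)) ''
        (G₁.cycleSpace : Set (G₁.E → ℤ))) = (G₂.cycleSpace : Set (G₂.E → ℤ))

/-- `c` chooses one representative edge in each C1-set (i.e. in each `Sim`-class). -/
def IsC1Choice (H : Multigraph) (c : H.E → H.E) : Prop :=
  (∀ e, H.Sim e (c e)) ∧ ∀ e e' : H.E, H.Sim e e' → c e = c e'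

/-- The graph `G^(3)` obtained by contracting, in each C1-set, all edges except the
chosen one. -/
noncomputable def threeGraph (H : Multigraph) (c : H.E → H.E) : Multigraph :=
  H.contractSet {e | c e ≠ e}

/-- The length function on `G^(3)`: a surviving edge gets the total length of its C1-set. -/
noncomputable def threeLength (H : Multigraph) (ℓ : H.E → ℝ) (c : H.E → H.E) :
    (threeGraph H c).E → ℝ :=
  fun e => ∑ e' ∈ Finset.univ.filter (fun e' => c e' = e.1), ℓ e'

/-- A weighted graph: a multigraph with a weight function on the vertices. -/
structure WeightedGraph where
  G : Multigraph
  w : G.V → ℕ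

namespace WeightedGraph

/-- The genus `g(G,w) = b₁(G) + Σ_v w(v)`. -/
def genus (X : WeightedGraph) : ℤ := X.G.b1 + ∑ v : X.G.V, (X.w v : ℤ)

/-- A weighted graph is stable if it is connected, has genus at least 2, and every
vertex of weight zero has valency at least 3. -/
def Stable (X : WeightedGraph) : Prop :=
  X.G.Connected ∧ 2 ≤ X.genus ∧ ∀ v : X.G.V, X.w v = 0 → 3 ≤ X.G.val v

/-- An isomorphism of weighted graphs. -/
structure Iso (X Y : WeightedGraph) where
  vEquiv : X.G.V ≃ Y.G.V
  eEquiv : X.G.E ≃ Y.G.E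
  endpoints : ∀ e : X.G.E,
    (Y.G.s (eEquiv e) = vEquiv (X.G.s e) ∧ Y.G.t (eEquiv e) = vEquiv (X.G.t e)) ∨
    (Y.G.s (eEquiv e) = vEquiv (X.G.t e) ∧ Y.G.t (eEquiv e) = vEquiv (X.G.s e))
  weight_eq : ∀ v : X.G.V, Y.w (vEquiv v) = X.w v

/-- Contraction of a single edge of a weighted graph: a non-loop edge is contracted by
identifying its two endpoints, the new vertex receiving the sum of the two weights;
a loop is deleted, the weight of its base vertex increasing by 1. -/
noncomputable def contract (X : WeightedGraph) (e₀ : X.G.E) : WeightedGraph :=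
  letI : DecidableEq (Quot (fun a b : X.G.V => a = X.G.s e₀ ∧ b = X.G.t e₀)) :=
    Classical.decEq _
  { G := { V := Quot (fun a b : X.G.V => a = X.G.s e₀ ∧ b = X.G.t e₀)
           E := {e : X.G.E // e ≠ e₀}
           fV := Fintype.ofSurjective (Quot.mk _) (fun q => Quot.exists_rep q)
           fE := inferInstance
           dV := inferInstance
           dE := inferInstance
           s := fun e => Quot.mk _ (X.G.s e.1)
           t := fun e => Quot.mk _ (X.G.t e.1) }
    w := fun q =>
      (∑ v ∈ Finset.univ.filter
          (fun v => Quot.mk (fun a b : X.G.V => a = X.G.s e₀ ∧ b = X.G.t e₀) v = q), X.w v) +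
      (if X.G.s e₀ = X.G.t e₀ ∧
          Quot.mk (fun a b : X.G.V => a = X.G.s e₀ ∧ b = X.G.t e₀) (X.G.s e₀) = q
       then 1 else 0) }

/-- One step: `Y` is (isomorphic to) the contraction of a single edge of `X`. -/
def ContractStep (X Y : WeightedGraph) : Prop :=
  ∃ e : X.G.E, Nonempty ((X.contract e).Iso Y)

/-- `X.ContractsTo Y`: `Y` is obtained from `X` by contracting finitely many edges. -/
def ContractsTo : WeightedGraph → WeightedGraph → Prop :=
  Relation.ReflTransGen ContractStep

/-- A sequence of exactly `n` loop contractions from `X` ending at (a graph isomorphic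
to) `Y`. -/
def LoopContractSeq : ℕ → WeightedGraph → WeightedGraph → Prop
  | 0, X, Y => Nonempty (X.Iso Y)
  | n + 1, X, Y => ∃ e : X.G.E, X.G.s e = X.G.t e ∧ LoopContractSeq n (X.contract e) Y

/-- The weightless graph `G''` obtained by replacing each vertex `v` of positive weight
with a weight-zero vertex carrying `w v` new loops. -/
def blowUp (X : WeightedGraph) : WeightedGraph where
  G := { V := X.G.V
         E := X.G.E ⊕ (Σ v : X.G.V, Fin (X.w v))
         fV := inferInstance
         fE := inferInstance
         dV := inferInstance
         dE := inferInstance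
         s := Sum.elim X.G.s (fun p => p.1)
         t := Sum.elim X.G.t (fun p => p.1) }
  w := fun _ => 0

def totalWeight (X : WeightedGraph) : ℕ := ∑ v : X.G.V, X.w v

/-- The lattice `Λ = H₁(G,ℤ) ⊕ ℤ^(g - b₁(G))` underlying the Jacobian torus of a
weighted graph. -/
abbrev JacLattice (X : WeightedGraph) : Type :=
  ↥X.G.cycleSpace × (Fin X.totalWeight → ℤ)

/-- The bilinear form on the Jacobian lattice: on `H₁(G,ℤ)` the edges are orthonormal,
and the form vanishes on the extra summand. -/
def jacForm (X : WeightedGraph) (p q : X.JacLattice) : ℤ :=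
  ∑ e : X.G.E, (p.1 : X.G.E → ℤ) e * (q.1 : X.G.E → ℤ) e

end WeightedGraph

/-- A pure tropical curve: a multigraph with positive edge lengths. -/
structure PureTropicalCurve where
  G : Multigraph
  ℓ : G.E → ℝ
  pos : ∀ e, 0 < ℓ e

/-- A (weighted) tropical curve: a multigraph with vertex weights and positive edge
lengths. -/
structure TropicalCurve where
  G : Multigraph
  w : G.V → ℕ
  ℓ : G.E → ℝ
  pos : ∀ e, 0 < ℓ e

namespace TropicalCurve

def totalWeight (Γ : TropicalCurve) : ℕ := ∑ v : Γ.G.V, Γ.w v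

/-- The lattice `Λ = H₁(G,ℤ) ⊕ ℤ^(g - b₁(G))` underlying `Jac(Γ)`. -/
abbrev JacLattice (Γ : TropicalCurve) : Type :=
  ↥Γ.G.cycleSpace × (Fin Γ.totalWeight → ℤ)

/-- The bilinear form `( , )_ℓ` on the Jacobian lattice, vanishing on the extra
summand. -/
noncomputable def jacForm (Γ : TropicalCurve) (p q : Γ.JacLattice) : ℝ :=
  ∑ e : Γ.G.E, Γ.ℓ e * ((p.1 : Γ.G.E → ℤ) e : ℝ) * ((q.1 : Γ.G.E → ℤ) e : ℝ)

end TropicalCurve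

/-- `Jac(Γ₁) ≅ Jac(Γ₂)`: a ℤ-linear isomorphism of the lattices preserving the bilinear
forms. -/
def TropJacIso (Γ₁ Γ₂ : TropicalCurve) : Prop :=
  ∃ φ : Γ₁.JacLattice ≃+ Γ₂.JacLattice,
    ∀ p q : Γ₁.JacLattice, Γ₂.jacForm (φ p) (φ q) = Γ₁.jacForm p q

namespace Multigraph

variable {G : Multigraph}

/-- The edge `e` joins the vertices `x` and `y`. -/
def Joins (e : G.E) (x y : G.V) : Prop :=
  (G.s e = x ∧ G.t e = y) ∨ (G.s e = y ∧ G.t e = x)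

/-- Adjacency after deleting the edges in `F`. -/
def AdjAvoiding (F : Set G.E) (x y : G.V) : Prop := ∃ e : G.E, e ∉ F ∧ Joins e x y

theorem Joins.symm {e : G.E} {x y : G.V} (h : Joins e x y) : Joins e y x := Or.symm h

theorem AdjAvoiding.symm {F : Set G.E} {x y : G.V} (h : AdjAvoiding F x y) :
    AdjAvoiding F y x :=
  let ⟨e, he, hj⟩ := h
  ⟨e, he, hj.symm⟩

theorem reflTransGen_adjAvoiding_symm {F : Set G.E} {x y : G.V}
    (h : Relation.ReflTransGen (AdjAvoiding F) x y) :
    Relation.ReflTransGen (AdjAvoiding F) y x :=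
  (@Relation.ReflTransGen.stdSymm _ _ ⟨fun _ _ => AdjAvoiding.symm⟩).symm _ _ h

/-- If the endpoints of a deleted edge `e` remain joined, then `e` lies on a cycle using no
other deleted edge. -/
theorem exists_isCycle_of_reflTransGen {F : Set G.E} {e : G.E} (he : e ∈ F)
    (h : Relation.ReflTransGen (AdjAvoiding F) (G.t e) (G.s e)) :
    ∃ C : Finset G.E, G.IsCycle C ∧ e ∈ C ∧ ∀ f ∈ C, f ∈ F → f = e := by
  classical
  have hreach : (SimpleGraph.fromRel (AdjAvoiding F)).Reachable (G.t e) (G.s e) := by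
    generalize G.s e = y at h
    induction h with
    | refl => exact .refl _
    | @tail b c _ hbc ih =>
      by_cases hne : b = c
      · exact hne ▸ ih
      · exact ih.trans
          (SimpleGraph.Adj.reachable ((SimpleGraph.fromRel_adj _ _ _).2 ⟨hne, Or.inl hbc⟩))
  obtain ⟨p, hp⟩ := hreach.exists_isPath
  have hinj : ∀ i j, i ≤ p.length → j ≤ p.length → p.getVert i = p.getVert j → i = j :=
    fun i j hi hj hij => hp.getVert_injOn hi hj hij
  have hstep : ∀ i : ℕ, i < p.length →
      AdjAvoiding F (p.getVert i) (p.getVert (i + 1)) := fun i hi =>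
    ((SimpleGraph.fromRel_adj _ _ _).1 (p.adj_getVert_succ hi)).2.elim id AdjAvoiding.symm
  choose g hgF hg using hstep
  let c : Fin (p.length + 1) → G.E := fun i => if hi : i.1 < p.length then g i hi else e
  let v : Fin (p.length + 1 + 1) → G.V :=
    fun i => if i.1 ≤ p.length then p.getVert i else G.t e
  have hcF : ∀ i, c i ∈ F → c i = e := by
    intro i hi
    by_cases hlt : i.1 < p.length
    · simp only [c, dif_pos hlt] at hi
      exact absurd hi (hgF _ hlt)
    · simp only [c, dif_neg hlt]
  refine ⟨Finset.image c Finset.univ,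
    ⟨p.length + 1, Nat.succ_pos _, c, v, ?_, ?_, ?_, ?_, rfl⟩, ?_, ?_⟩
  · intro i j hij
    simp only [c] at hij
    split_ifs at hij with hi hj hj
    · have h1 := hg i hi
      have h2 := hg j hj
      rw [hij] at h1
      have key := hinj i j hi.le hj.le
      have key1 := hinj i (j + 1) hi.le hj
      have key2 := hinj (i + 1) j hi hj.le
      simp only [Joins] at h1 h2
      ext
      grind
    · exact absurd (by rwa [hij]) (hgF _ hi)
    · exact absurd (by rwa [← hij]) (hgF _ hj)
    · ext; omega
  · intro i
    have hle : i.1 ≤ p.length := Nat.lt_succ_iff.1 i.2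
    by_cases hi : i.1 < p.length
    · have := hg i hi
      simpa [c, v, hi, hle, Joins, Nat.succ_le_of_lt hi] using this
    · have hi' : i.1 = p.length := by omega
      left
      simp [c, v, hi']
  · simp [v]
  · intro i j hij
    have hi := i.2
    have hj := j.2
    have key := hinj i j
    have key1 := hinj i 0
    have key2 := hinj j 0
    simp only [p.getVert_zero] at key1 key2
    simp only [Fin.ext_iff, Fin.val_zero, Fin.val_last]
    simp only [v] at hij
    grind
  · exact Finset.mem_image.2 ⟨Fin.last _, Finset.mem_univ _, by simp [c]⟩
  · intro f hf hfF
    obtain ⟨i, -, rfl⟩ := Finset.mem_image.1 hf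
    exact hcF i hfF

/-- If `e` lies on a cycle using no other edge of `F`, then its endpoints stay joined after
deleting `F`. -/
theorem IsCycle.reflTransGen_adjAvoiding {F : Set G.E} {C : Finset G.E} (hC : G.IsCycle C)
    {e : G.E} (he : e ∈ C) (hF : ∀ f ∈ C, f ∈ F → f = e) :
    Relation.ReflTransGen (AdjAvoiding F) (G.s e) (G.t e) := by
  obtain ⟨n, -, c, v, hinj, hjoin, hclosed, -, rfl⟩ := hC
  obtain ⟨i, -, rfl⟩ := Finset.mem_image.1 he
  have hstep : ∀ j : Fin n, j ≠ i → AdjAvoiding F (v j.castSucc) (v j.succ) := fun j hj =>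
    ⟨c j, fun hjF => hj (hinj (hF _ (Finset.mem_image_of_mem _ (Finset.mem_univ _)) hjF)),
      hjoin j⟩
  have hbefore : ∀ j : Fin (n + 1), j ≤ i.castSucc →
      Relation.ReflTransGen (AdjAvoiding F) (v 0) (v j) := by
    intro j
    induction j using Fin.induction with
    | zero => exact fun _ => .refl
    | succ j ih =>
      intro hj
      have hlt : j < i := Fin.succ_le_castSucc_iff.1 hj
      exact (ih (Fin.castSucc_le_castSucc_iff.2 hlt.le)).tail (hstep j hlt.ne)
  have hafter : ∀ j : Fin (n + 1), i.succ ≤ j →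
      Relation.ReflTransGen (AdjAvoiding F) (v i.succ) (v j) := by
    intro j
    induction j using Fin.induction with
    | zero => exact fun hj => absurd hj (by simp)
    | succ j ih =>
      intro hj
      rcases (Fin.succ_le_succ_iff.1 hj).eq_or_lt with rfl | hlt
      · exact .refl
      · exact (ih (Fin.succ_le_castSucc_iff.2 hlt)).tail (hstep j hlt.ne')
  have hwalk : Relation.ReflTransGen (AdjAvoiding F) (v i.succ) (v i.castSucc) :=
    (hafter _ (Fin.le_last _)).trans (hclosed ▸ hbefore _ le_rfl)
  rcases hjoin i with ⟨hs, ht⟩ | ⟨hs, ht⟩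
  · rw [hs, ht]
    exact reflTransGen_adjAvoiding_symm hwalk
  · rw [hs, ht]
    exact hwalk

/-- Walks avoiding `F` can be rerouted to avoid `F'` when the endpoints of the newly deleted
edges stay joined. -/
theorem reflTransGen_adjAvoiding_of_forall {F F' : Set G.E}
    (h : ∀ e ∈ F', e ∉ F → Relation.ReflTransGen (AdjAvoiding F') (G.s e) (G.t e)) {x y : G.V}
    (hxy : Relation.ReflTransGen (AdjAvoiding F) x y) :
    Relation.ReflTransGen (AdjAvoiding F') x y := by
  induction hxy with
  | refl => exact .refl
  | tail _ hbc ih =>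
    obtain ⟨e, heF, hj⟩ := hbc
    refine ih.trans ?_
    by_cases he : e ∈ F'
    · rcases hj with ⟨rfl, rfl⟩ | ⟨rfl, rfl⟩
      · exact h e he heF
      · exact reflTransGen_adjAvoiding_symm (h e he heF)
    · exact .single ⟨e, he, hj⟩

theorem Connected.connectedAvoiding (hc : G.Connected) {F : Set G.E}
    (h : ∀ e ∈ F, Relation.ReflTransGen (AdjAvoiding F) (G.s e) (G.t e)) :
    G.ConnectedAvoiding F := fun a b =>
  reflTransGen_adjAvoiding_of_forall (F := ∅) (fun e he _ => h e he)
    ((hc.2 a b).lift id fun _ _ ⟨e, he⟩ => ⟨e, Set.notMem_empty e, he⟩)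

theorem Bridgeless.reflTransGen_adjAvoiding_singleton (hb : G.Bridgeless) (e : G.E) :
    Relation.ReflTransGen (AdjAvoiding {e}) (G.s e) (G.t e) := by
  obtain ⟨C, hC, heC⟩ : ∃ C : Finset G.E, G.IsCycle C ∧ e ∈ C := by
    simpa [IsBridge] using hb e
  exact hC.reflTransGen_adjAvoiding heC fun _ _ hf => hf

/-- In a connected bridgeless graph, a pair of edges separated by a cycle does not disconnect. -/
theorem Connected.connectedAvoiding_pair (hc : G.Connected) (hb : G.Bridgeless) {e f : G.E}
    {C : Finset G.E} (hC : G.IsCycle C) (he : e ∈ C) (hf : f ∉ C) :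
    G.ConnectedAvoiding {e, f} := by
  have hjoin : Relation.ReflTransGen (AdjAvoiding {e, f}) (G.s e) (G.t e) :=
    hC.reflTransGen_adjAvoiding he fun g hg hgF =>
      hgF.resolve_right fun hgf => hf (hgf ▸ hg)
  refine hc.connectedAvoiding ?_
  rintro g (rfl | rfl)
  · exact hjoin
  · refine reflTransGen_adjAvoiding_of_forall ?_ (hb.reflTransGen_adjAvoiding_singleton g)
    rintro k (rfl | rfl) hk
    · exact hjoin
    · exact absurd rfl hk

theorem eq_of_sim_of_connectedAvoiding {e f : G.E} (h : G.ConnectedAvoiding {e, f})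
    (hsim : G.Sim e f) : f = e := by
  obtain ⟨C, hC, heC, hCF⟩ :=
    exists_isCycle_of_reflTransGen (F := {e, f}) (Or.inl rfl) (h (G.t e) (G.s e))
  exact hCF f ((hsim C hC).1 heC) (Or.inr rfl)

end Multigraph

/-- A connected bridgeless multigraph is 3-edge-connected (removal of any
set of at most two edges leaves it connected) if and only if every C1-set has
cardinality 1. -/
theorem three_edge_connected_iff_c1_singletons (G : Multigraph) (hc : G.Connected)
    (hb : G.Bridgeless) :
    (∀ F : Finset G.E, F.card ≤ 2 → G.ConnectedAvoiding ↑F) ↔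
    (∀ S : Set G.E, G.IsC1Set S → S.ncard = 1) := by
  constructor
  · rintro h _ ⟨e, rfl⟩
    refine Set.ncard_eq_one.2 ⟨e, Set.eq_singleton_iff_unique_mem.2 ⟨fun _ _ => Iff.rfl, ?_⟩⟩
    intro f hf
    refine Multigraph.eq_of_sim_of_connectedAvoiding ?_ hf
    simpa using h {e, f} Finset.card_le_two
  · intro h F hF
    rcases Nat.le_succ_iff.1 hF with hF | hF
    · refine hc.connectedAvoiding fun e he => ?_
      obtain rfl : F = {e} :=
        Finset.eq_singleton_iff_unique_mem.2
          ⟨he, fun f hf => Finset.card_le_one.1 hF f hf e he⟩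
      simpa using hb.reflTransGen_adjAvoiding_singleton e
    · obtain ⟨e, f, hne, rfl⟩ := Finset.card_eq_two.1 hF
      have hns : ¬ G.Sim e f := by
        intro hsim
        obtain ⟨a, ha⟩ := Set.ncard_eq_one.1 (h _ ⟨e, rfl⟩)
        have hea : e ∈ ({a} : Set G.E) := ha ▸ fun _ _ => Iff.rfl
        have hfa : f ∈ ({a} : Set G.E) := ha ▸ hsim
        exact hne (hea.trans hfa.symm)
      simp only [Multigraph.Sim, not_forall] at hns
      obtain ⟨C, hC, hCef⟩ := hns
      rw [Finset.coe_pair]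
      by_cases he : e ∈ C
      · exact hc.connectedAvoiding_pair hb hC he fun hf => hCef (iff_of_true he hf)
      · rw [Set.pair_comm]
        exact hc.connectedAvoiding_pair hb hC
          (by_contra fun hf => hCef (iff_of_false he hf)) he
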